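/- Under the stated hypotheses on the graph G (λ_1 = m, λ nonincreasing, μ nondecreasing, and Condition (4.1)), the ring S/I_G is Cohen–Macaulay if and only if min_{1≤j≤n} (λ_j − μ_j + j − 1) = max_{1≤j≤n} (λ_j − μ_j + j − 1) ≤ n; here Cohen–Macaulayness is expressed as: there exists a list of elements of the maximal ideal 𝔪 = (x_1,…,x_m) of S that is a regular sequence on the S-module S/I_G and whose length equals the Krull dimension of the ring S/I_G. -/

import Mathlib

open MvPolynomial
open RingTheory.Sequence
open scoped Pointwise TensorProduct

/-!
Every minimal vertex cover of the graph is one of the sets `C_i`, for `0 ≤ i ≤ n`, consisting of the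
first `i` vertices and of the neighbours of the next one; `C_n` is the set of the first `n` vertices
and `C_i` has `λ_{i+1} - μ_{i+1} + i` elements for `i < n`. Hence the dimension of `S/I_G` is
`m - min |C_i|`. The depth is at most `m - |C_i|` for `i < n`, because the Koszul complex of the
variables on `S/I_G` has nonzero homology in degree `|C_i|`; as `|C_{n-1}| ≥ n`, Cohen–Macaulayness
forces all the `C_i` to have `n` elements.

Conversely, adding the variables to `I_G` one at a time and taking the colon ideal by the next one
filters `S/I_G` with the quotients `S/(x_v : v ∈ C_i)`, so it suffices to find `m - n` linear forms
that are regular on all of these. If the `C_i` have equal size, the complements of two consecutive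
ones differ by at most one exchange of vertices. So the vertices outside `C_n` can serve as colours,
and the vertices can be coloured such that each complement contains every colour exactly once. The
sums of the variables of one colour are the required forms.
-/

namespace Koszul

theorem sum_smul_mul_sum_smul_self {ι A B : Type*} [Fintype ι] [CommRing A] [Ring B] [Algebra A B]
    {c : ι → B} (hsq : ∀ v, c v * c v = 0) (hc : ∀ u v, c u * c v = -(c v * c u)) (y : ι → A) :
    (∑ v, y v • c v) * ∑ v, y v • c v = 0 := by
  rw [Finset.sum_mul_sum, ← Finset.sum_product']
  refine Finset.sum_involution (fun p _ ↦ p.swap) (fun p _ ↦ ?_) (fun p _ hp hswap ↦ hp ?_)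
    (fun _ _ ↦ Finset.mem_univ _) (fun _ _ ↦ Prod.swap_swap _)
  · rw [Prod.fst_swap, Prod.snd_swap, smul_mul_smul_comm, smul_mul_smul_comm, hc p.1, mul_comm,
      smul_neg, neg_add_cancel]
  · rw [smul_mul_smul_comm, ← congrArg Prod.snd hswap, Prod.snd_swap, hsq, smul_zero]

section Exterior

variable {K : Type*} [Field K] {V : Type*} [AddCommGroup V] [Module K V]

/-- Contraction (interior multiplication) of exterior forms by a functional. -/
noncomputable def contraction (f : Module.Dual K V) : Module.End K (ExteriorAlgebra K V) :=
  CliffordAlgebra.contractLeft (Q := 0) f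

/-- Left exterior multiplication by a vector. -/
noncomputable def wedge (a : V) : Module.End K (ExteriorAlgebra K V) :=
  Algebra.lmul K _ (ExteriorAlgebra.ι K a)

theorem contraction_mul_self (f : Module.Dual K V) : contraction f * contraction f = 0 :=
  LinearMap.ext fun w ↦ CliffordAlgebra.contractLeft_contractLeft (d := f) w

theorem contraction_mul_comm (f g : Module.Dual K V) :
    contraction f * contraction g = -(contraction g * contraction f) :=
  LinearMap.ext fun w ↦ CliffordAlgebra.contractLeft_comm (d := f) g w

theorem contraction_wedge (f : Module.Dual K V) (a : V) (w : ExteriorAlgebra K V) :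
    contraction f (wedge a w) = f a • w - wedge a (contraction f w) :=
  CliffordAlgebra.contractLeft_ι_mul (d := f) a w

theorem contraction_one (f : Module.Dual K V) : contraction f 1 = 0 :=
  CliffordAlgebra.contractLeft_one (Q := 0) f

theorem wedge_mul_self (a : V) : wedge a * wedge a = (0 : Module.End K _) := by
  rw [wedge, ← map_mul, ExteriorAlgebra.ι_sq_zero, map_zero]

theorem wedge_mul_comm (a b : V) : wedge a * wedge b = -(wedge b * wedge a : Module.End K _) := by
  rw [eq_neg_iff_add_eq_zero, wedge, wedge, ← map_mul (Algebra.lmul K _),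
    ← map_mul (Algebra.lmul K _), ← map_add, ExteriorAlgebra.ι_add_mul_swap, map_zero]

theorem wedge_mem_exteriorPower (a : V) {k : ℕ} {w : ExteriorAlgebra K V} (hw : w ∈ ⋀[K]^k V) :
    wedge a w ∈ ⋀[K]^(k + 1) V := by
  rw [ExteriorAlgebra.exteriorPower, pow_succ']
  exact Submodule.mul_mem_mul (LinearMap.mem_range_self _ _) hw

theorem contraction_mem_exteriorPower (f : Module.Dual K V) {k : ℕ} {w : ExteriorAlgebra K V}
    (hw : w ∈ ⋀[K]^(k + 1) V) : contraction f w ∈ ⋀[K]^k V := by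
  induction k generalizing w with
  | zero =>
    obtain ⟨a, rfl⟩ : w ∈ LinearMap.range (ExteriorAlgebra.ι K) := by simpa using hw
    rw [ExteriorAlgebra.exteriorPower, pow_zero]
    exact Submodule.mem_one.mpr ⟨f a, (CliffordAlgebra.contractLeft_ι (Q := 0) f a).symm⟩
  | succ k ih =>
    rw [ExteriorAlgebra.exteriorPower, pow_succ'] at hw
    induction hw using Submodule.mul_induction_on' with
    | add x _ y _ hx hy => rw [map_add]; exact add_mem hx hy
    | mem_mul_mem a ha w hw =>
      obtain ⟨a, rfl⟩ := ha
      exact contraction_wedge f a w ▸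
        sub_mem (Submodule.smul_mem _ _ hw) (wedge_mem_exteriorPower a (ih hw))

theorem exteriorPower_eq_bot [FiniteDimensional K V] {k : ℕ} (hk : Module.finrank K V < k) :
    ⋀[K]^k V = ⊥ := by
  rw [← Submodule.finrank_eq_zero, exteriorPower.finrank_eq, Nat.choose_eq_zero_of_lt hk]

theorem contraction_ne_zero {f : Module.Dual K V} {a : V} (hfa : f a = 1)
    {w : ExteriorAlgebra K V} (hw : w ≠ 0) (haw : wedge a w = 0) : contraction f w ≠ 0 := by
  intro hfw
  have hcw := contraction_wedge f a w
  rw [haw, hfw, hfa, map_zero, map_zero, one_smul, sub_zero] at hcw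
  exact hw hcw.symm

variable {ι : Type*} [DecidableEq ι]

variable (K) in
theorem exists_mem_exteriorPower_card (P : Finset ι) :
    ∃ w ∈ ⋀[K]^P.card (ι → K), w ≠ 0 ∧ (∀ v ∉ P, contraction (LinearMap.proj v) w = 0) ∧
      ∀ v ∈ P, wedge (Pi.single v 1) w = 0 := by
  induction P using Finset.induction_on with
  | empty =>
    refine ⟨1, ?_, one_ne_zero, fun v _ ↦ contraction_one _, by simp⟩
    rw [Finset.card_empty, ExteriorAlgebra.exteriorPower, pow_zero]
    exact Submodule.one_le.mp le_rfl
  | insert a P ha ih =>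
    obtain ⟨w, hwP, hw, hcon, hwedge⟩ := ih
    refine ⟨wedge (Pi.single a 1) w, ?_, fun h ↦ hw ?_, fun v hv ↦ ?_, fun v hv ↦ ?_⟩
    · rw [Finset.card_insert_of_notMem ha]
      exact wedge_mem_exteriorPower _ hwP
    · simpa [h, hcon a ha] using (contraction_wedge (LinearMap.proj a) (Pi.single a 1) w).symm
    · rw [Finset.mem_insert, not_or] at hv
      rw [contraction_wedge, hcon v hv.2, LinearMap.proj_apply, Pi.single_eq_of_ne hv.1, zero_smul,
        map_zero, sub_zero]
    · obtain rfl | hv := Finset.mem_insert.mp hv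
      · exact LinearMap.congr_fun (wedge_mul_self (Pi.single v 1 : ι → K)) w
      · have hva := wedge_mul_comm (K := K) (Pi.single v 1 : ι → K) (Pi.single a 1)
        refine (LinearMap.congr_fun hva w).trans ?_
        rw [LinearMap.neg_apply, Module.End.mul_apply, hwedge v hv, map_zero, neg_zero]

theorem contraction_mul_wedge_add (u v : ι) :
    contraction (LinearMap.proj u) * wedge (Pi.single v 1) +
      wedge (Pi.single v 1) * contraction (LinearMap.proj u) =
        if u = v then (1 : Module.End K (ExteriorAlgebra K (ι → K))) else 0 := by
  refine LinearMap.ext fun w ↦ ?_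
  simp only [LinearMap.add_apply, Module.End.mul_apply, contraction_wedge, LinearMap.proj_apply,
    sub_add_cancel, Pi.single_apply]
  split_ifs <;> simp

end Exterior

theorem mem_range_of_mkQ_mem_range {R C : Type*} [CommRing R] [AddCommGroup C] [Module R C]
    {d : Module.End R C} (hd : d * d = 0) {r : R} (hr : IsSMulRegular C r) {y z : C}
    (hyz : d y = r • z)
    (hy : (r • (⊤ : Submodule R C)).mkQ y ∈ LinearMap.range (QuotSMulTop.map r d)) :
    z ∈ LinearMap.range d := by
  obtain ⟨v, hv⟩ := hy
  obtain ⟨v, rfl⟩ := Submodule.mkQ_surjective _ v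
  obtain ⟨w, -, hw⟩ : d v - y ∈ r • (⊤ : Submodule R C) := (Submodule.Quotient.eq _).mp hv
  have hddv : d (d v) = 0 := LinearMap.congr_fun hd v
  have hdw : r • d w = -d y := by
    rw [← map_smul]; simpa [hddv] using congrArg d hw
  refine ⟨-w, hr ?_⟩
  simp only [map_neg, smul_neg, hdw, hyz, neg_neg]

-- `F k` plays the role of the elements of degree `k` of a complex.
theorem mem_range_of_isWeaklyRegular_of_homotopies {R : Type*} [CommRing R] {m : ℕ}
    {rs : List R} {C : Type*} [AddCommGroup C] [Module R C] {d : Module.End R C}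
    (hd : d * d = 0) {F : ℕ → Submodule R C} (hF : ∀ k, m < k → F k = ⊥)
    (hrs : IsWeaklyRegular C rs)
    (hh : ∀ r ∈ rs, ∃ h : Module.End R C, d * h + h * d = algebraMap R _ r ∧
      ∀ k, F k ≤ (F (k + 1)).comap h)
    {k : ℕ} (hk : m < k + rs.length) {z : C} (hzF : z ∈ F k) (hz : d z = 0) :
    z ∈ LinearMap.range d := by
  induction rs generalizing C k with
  | nil =>
    rw [hF k (by simpa using hk), Submodule.mem_bot] at hzF
    exact hzF ▸ zero_mem _
  | cons r rs ih =>
    obtain ⟨hr, hrs⟩ := (isWeaklyRegular_cons_iff C r rs).mp hrs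
    obtain ⟨h, hdh, hhF⟩ := hh r (by simp)
    have hdhz : d (h z) = r • z := by
      simpa [hz, Module.algebraMap_end_apply] using LinearMap.congr_fun hdh z
    have hmap (f g : Module.End R C) :
        QuotSMulTop.map r (f * g) = QuotSMulTop.map r f * QuotSMulTop.map r g :=
      QuotSMulTop.map_comp r f g
    let π := (r • (⊤ : Submodule R C)).mkQ
    have hπ : π (h z) ∈ LinearMap.range (QuotSMulTop.map r d) := by
      refine ih (F := fun k ↦ (F k).map π) (by rw [← hmap, hd, map_zero])
        (fun k hk ↦ by rw [hF k hk, Submodule.map_bot]) hrs (fun s hs ↦ ?_)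
        (k := k + 1) (by simp only [List.length_cons] at hk; omega)
        (Submodule.mem_map_of_mem (hhF k hzF)) ?_
      · obtain ⟨g, hg, hgF⟩ := hh s (by simp [hs])
        refine ⟨QuotSMulTop.map r g, ?_, ?_⟩
        · rw [← hmap, ← hmap, ← map_add, hg, Algebra.algebraMap_eq_smul_one, map_smul,
            Algebra.algebraMap_eq_smul_one]
          exact congrArg _ (QuotSMulTop.map_id r C)
        · rintro k _ ⟨w, hw, rfl⟩
          exact Submodule.mem_map_of_mem (hgF k hw)
      · simp only [π, Submodule.mkQ_apply, QuotSMulTop.map_apply_mk, hdhz]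
        exact (Submodule.Quotient.mk_eq_zero _).mpr
          (Submodule.smul_mem_pointwise_smul _ _ _ trivial)
    exact mem_range_of_mkQ_mem_range hd hr hdhz hπ

section Differential

variable {K A ι : Type*} [Field K] [CommRing A] [Algebra K A]

theorem baseChange_mem_baseChange {M : Type*} [AddCommGroup M] [Module K M] {f : Module.End K M}
    {p q : Submodule K M} (h : p ≤ q.comap f) {t : A ⊗[K] M} (ht : t ∈ p.baseChange A) :
    f.baseChange A t ∈ q.baseChange A := by
  rw [Submodule.baseChange_eq_span] at ht
  induction ht using Submodule.span_induction with
  | mem t ht =>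
    obtain ⟨w, hw, rfl⟩ := ht
    exact Submodule.tmul_mem_baseChange_of_mem 1 (h hw)
  | zero => exact map_zero (f.baseChange A) ▸ zero_mem _
  | add s t _ _ hs ht => exact map_add (f.baseChange A) s t ▸ add_mem hs ht
  | smul a t _ ht => exact map_smul (f.baseChange A) a t ▸ Submodule.smul_mem _ a ht

/-- Applies a functional on `A` to the coefficients of an element of the Koszul complex. -/
noncomputable def coefficient (f : A →ₗ[K] K) :
    A ⊗[K] ExteriorAlgebra K (ι → K) →ₗ[K] ExteriorAlgebra K (ι → K) :=
  (TensorProduct.lid K _).toLinearMap ∘ₗ f.rTensor _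

theorem coefficient_tmul (f : A →ₗ[K] K) (a : A) (w : ExteriorAlgebra K (ι → K)) :
    coefficient f (a ⊗ₜ w) = f a • w := rfl

variable [Fintype ι]

/-- The differential of the Koszul complex of `y : ι → A`, whose underlying module `A ⊗ ⋀ K^ι` is
the exterior algebra of `A^ι`. -/
noncomputable def differential :
    (ι → A) →ₗ[A] Module.End A (A ⊗[K] ExteriorAlgebra K (ι → K)) :=
  Fintype.linearCombination A fun v ↦ (contraction (LinearMap.proj v)).baseChange A

theorem differential_mul_self (y : ι → A) :
    differential (K := K) y * differential y = 0 := by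
  simp only [differential, Fintype.linearCombination_apply]
  refine sum_smul_mul_sum_smul_self (fun v ↦ ?_) (fun u v ↦ ?_) y
  · rw [← LinearMap.baseChange_mul, contraction_mul_self, LinearMap.baseChange_zero]
  · rw [← LinearMap.baseChange_mul, ← LinearMap.baseChange_mul, contraction_mul_comm,
      LinearMap.baseChange_neg]

theorem differential_mul_comm (y z : ι → A) :
    differential (K := K) y * differential z = -(differential z * differential y) := by
  have h := differential_mul_self (K := K) (y + z)
  rw [map_add, add_mul, mul_add, mul_add, differential_mul_self, differential_mul_self, zero_add,
    add_zero] at h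
  exact eq_neg_of_add_eq_zero_left h

theorem differential_one_tmul (y : ι → A) (w : ExteriorAlgebra K (ι → K)) :
    differential y (1 ⊗ₜ w) = ∑ v, y v ⊗ₜ contraction (LinearMap.proj v) w := by
  simp [differential, Fintype.linearCombination_apply, TensorProduct.smul_tmul']

theorem differential_mul_differential_eq_zero {y z : ι → A} (h : ∀ u v, y u * z v = 0) :
    differential (K := K) y * differential z = 0 := by
  simp only [differential, Fintype.linearCombination_apply, Finset.sum_mul_sum,
    smul_mul_smul_comm, h, zero_smul, Finset.sum_const_zero]

/-- Left exterior multiplication by `a : ι → A` on the Koszul complex. It is a homotopy between `0`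
and multiplication by `∑ v, a v * y v`. -/
noncomputable def homotopy [DecidableEq ι] :
    (ι → A) →ₗ[A] Module.End A (A ⊗[K] ExteriorAlgebra K (ι → K)) :=
  Fintype.linearCombination A fun v ↦ (wedge (Pi.single v 1)).baseChange A

theorem differential_mul_homotopy_add [DecidableEq ι] (y a : ι → A) :
    differential (K := K) y * homotopy a + homotopy a * differential y =
      algebraMap A _ (∑ v, a v * y v) := by
  have hcw (u v : ι) : (contraction (LinearMap.proj u)).baseChange A *
      (wedge (Pi.single v 1 : ι → K)).baseChange A +
        (wedge (Pi.single v 1)).baseChange A * (contraction (LinearMap.proj u)).baseChange A =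
      if u = v then 1 else 0 := by
    rw [← LinearMap.baseChange_mul, ← LinearMap.baseChange_mul, ← LinearMap.baseChange_add,
      contraction_mul_wedge_add]
    split_ifs <;> simp [LinearMap.baseChange_one]
  simp only [differential, homotopy, Fintype.linearCombination_apply, Finset.sum_mul_sum]
  rw [Finset.sum_comm (s := Finset.univ (α := ι)), ← Finset.sum_add_distrib]
  simp only [← Finset.sum_add_distrib, smul_mul_smul_comm, mul_comm (y _), ← smul_add, hcw]
  simp [Algebra.algebraMap_eq_smul_one]

theorem homotopy_mem_baseChange_exteriorPower [DecidableEq ι] (a : ι → A) {k : ℕ}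
    {t : A ⊗[K] ExteriorAlgebra K (ι → K)}
    (ht : t ∈ (⋀[K]^k (ι → K)).baseChange A) :
    homotopy a t ∈ (⋀[K]^(k + 1) (ι → K)).baseChange A := by
  rw [homotopy, Fintype.linearCombination_apply, LinearMap.sum_apply]
  exact sum_mem fun v _ ↦ Submodule.smul_mem _ _
    (baseChange_mem_baseChange (fun _ ↦ wedge_mem_exteriorPower _) ht)

theorem mem_range_differential {x : ι → A} {rs : List A}
    (hrs : IsWeaklyRegular A rs) (hx : ∀ r ∈ rs, r ∈ Ideal.span (Set.range x)) {k : ℕ}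
    (hk : Fintype.card ι < k + rs.length) {z : A ⊗[K] ExteriorAlgebra K (ι → K)}
    (hzk : z ∈ (⋀[K]^k (ι → K)).baseChange A) (hz : differential x z = 0) :
    z ∈ LinearMap.range (differential x) := by
  classical
  refine mem_range_of_isWeaklyRegular_of_homotopies (differential_mul_self x)
    (F := fun k ↦ (⋀[K]^k (ι → K)).baseChange A) (fun k hk ↦ ?_) ?_ (fun r hr ↦ ?_) hk hzk hz
  · rw [exteriorPower_eq_bot (by simpa using hk), Submodule.baseChange_bot]
  · exact ((TensorProduct.lid A _).isWeaklyRegular_congr rs).mp hrs.isWeaklyRegular_rTensor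
  · obtain ⟨a, rfl⟩ := Ideal.mem_span_range_iff_exists_fun.mp (hx r hr)
    exact ⟨homotopy a, differential_mul_homotopy_add x a,
      fun k t ht ↦ homotopy_mem_baseChange_exteriorPower a ht⟩

variable [DecidableEq ι]

/-- The candidate cycle `x_i w - e_i ∧ ∂_T w`, where `∂_T` only uses the elements `x_a` with
`a ∈ T`. It is meant for `w = ⋀ v ∈ T ∪ B, e_v`, where the `x_b` with `b ∈ B` annihilate `x_i` and
all the `x_a`. -/
noncomputable def cycle (x : ι → A) (T : Finset ι) (i : ι) (w : ExteriorAlgebra K (ι → K)) :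
    A ⊗[K] ExteriorAlgebra K (ι → K) :=
  x i • (1 ⊗ₜ w) - homotopy (Pi.single i 1) (differential (T.piecewise x 0) (1 ⊗ₜ w))

theorem cycle_mem_baseChange_exteriorPower (x : ι → A) (T : Finset ι) (i : ι) {k : ℕ}
    {w : ExteriorAlgebra K (ι → K)} (hw : w ∈ ⋀[K]^(k + 1) (ι → K)) :
    cycle x T i w ∈ (⋀[K]^(k + 1) (ι → K)).baseChange A := by
  refine sub_mem (Submodule.smul_mem _ _ (Submodule.tmul_mem_baseChange_of_mem 1 hw))
    (homotopy_mem_baseChange_exteriorPower _ ?_)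
  rw [differential_one_tmul]
  exact sum_mem fun v _ ↦
    Submodule.tmul_mem_baseChange_of_mem _ (contraction_mem_exteriorPower _ hw)

theorem differential_cycle {x : ι → A} {T B : Finset ι} (hTB : Disjoint T B) {i : ι}
    (hx : ∀ a ∈ insert i T, ∀ b ∈ B, x a * x b = 0) {w : ExteriorAlgebra K (ι → K)}
    (hw : ∀ v ∉ T ∪ B, contraction (LinearMap.proj v) w = 0) :
    differential x (cycle x T i w) = 0 := by
  set xT := T.piecewise x 0
  set xB := B.piecewise x 0
  have hsplit : differential x (1 ⊗ₜ w) = differential xT (1 ⊗ₜ w) + differential xB (1 ⊗ₜ w) := by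
    simp only [differential_one_tmul, ← Finset.sum_add_distrib, ← TensorProduct.add_tmul]
    refine Finset.sum_congr rfl fun v _ ↦ ?_
    by_cases hv : v ∈ T ∪ B
    · have hvTB : v ∈ T → v ∉ B := fun h ↦ Finset.disjoint_left.mp hTB h
      by_cases hvT : v ∈ T <;> by_cases hvB : v ∈ B <;> simp_all [xT, xB]
    · rw [hw v hv, TensorProduct.tmul_zero, TensorProduct.tmul_zero]
  have hiB : x i • differential xB (1 ⊗ₜ[K] w) = 0 := by
    have : x i • xB = 0 := by
      ext b
      by_cases hb : b ∈ B <;> simp [xB, hb, hx]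
    rw [← LinearMap.smul_apply, ← map_smul, this, map_zero, LinearMap.zero_apply]
  have hTB : differential (K := K) xT * differential xB = 0 := by
    refine differential_mul_differential_eq_zero fun a b ↦ ?_
    by_cases ha : a ∈ T <;> by_cases hb : b ∈ B <;> simp [xT, xB, ha, hb, hx]
  have hxT : differential x (differential xT (1 ⊗ₜ[K] w)) = 0 := by
    rw [← Module.End.mul_apply, differential_mul_comm, LinearMap.neg_apply, Module.End.mul_apply,
      hsplit, map_add, ← Module.End.mul_apply, ← Module.End.mul_apply, differential_mul_self, hTB]
    simp
  have hhom := LinearMap.congr_fun (differential_mul_homotopy_add x (Pi.single i 1))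
    (differential xT (1 ⊗ₜ[K] w))
  simp only [LinearMap.add_apply, Module.End.mul_apply, hxT, map_zero, add_zero, Pi.single_apply,
    ite_mul, one_mul, zero_mul, Finset.sum_ite_eq', Finset.mem_univ, if_true,
    Module.algebraMap_end_apply] at hhom
  rw [cycle, map_sub, map_smul, hhom, hsplit, smul_add, hiB, add_zero, sub_self]

theorem coefficient_homotopy_single (f : A →ₗ[K] K) (i : ι)
    (t : A ⊗[K] ExteriorAlgebra K (ι → K)) :
    coefficient f (homotopy (Pi.single i 1) t) = wedge (Pi.single i 1) (coefficient f t) := by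
  simp only [homotopy, Fintype.linearCombination_apply_single, one_smul]
  induction t with
  | zero => simp
  | add s t hs ht => rw [map_add, map_add, hs, ht, map_add, map_add]
  | tmul a w => rw [LinearMap.baseChange_tmul, coefficient_tmul, coefficient_tmul, map_smul]

theorem coefficient_differential {x : ι → A} {v : ι} {f g : A →ₗ[K] K}
    (hfg : ∀ u a, f (x u * a) = if u = v then g a else 0) (t : A ⊗[K] ExteriorAlgebra K (ι → K)) :
    coefficient f (differential x t) = contraction (LinearMap.proj v) (coefficient g t) := by
  simp only [differential, Fintype.linearCombination_apply, LinearMap.sum_apply,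
    LinearMap.smul_apply, map_sum]
  induction t with
  | zero => simp
  | add s t hs ht => simp only [map_add, smul_add, Finset.sum_add_distrib, hs, ht]
  | tmul a w =>
    simp [TensorProduct.smul_tmul', coefficient_tmul, hfg, Finset.sum_ite_eq']

theorem coefficient_cycle {x : ι → A} {v : ι} {f : A →ₗ[K] K}
    (hf : ∀ u, f (x u) = if u = v then 1 else 0) {T : Finset ι} (hv : v ∉ T) (i : ι)
    (w : ExteriorAlgebra K (ι → K)) :
    coefficient f (cycle x T i w) = if i = v then w else 0 := by
  have hT (u : ι) : f (T.piecewise x 0 u) = 0 := by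
    by_cases hu : u ∈ T
    · rw [Finset.piecewise_eq_of_mem _ _ _ hu, hf, if_neg (ne_of_mem_of_not_mem hu hv)]
    · rw [Finset.piecewise_eq_of_notMem _ _ _ hu, Pi.zero_apply, map_zero]
  rw [cycle, map_sub, coefficient_homotopy_single, differential_one_tmul, map_sum]
  simp [TensorProduct.smul_tmul', coefficient_tmul, hT, hf]

-- `ε` and `f v` extract the constant coefficient and the coefficient of `x v`. The cycle is not a
-- boundary: if it were `∂ t`, the coefficients outside `T` would give `∂_i (ε t) = w` and
-- `∂_b (ε t) = 0` for `b ∈ B` other than `i`, whence `∂_b w = 0`, which contradicts `e_b ∧ w = 0`.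
theorem card_add_card_add_length_le {x : ι → A} (ε : A →ₗ[K] K) (f : ι → A →ₗ[K] K)
    (hε : ε 1 = 1) (hf : ∀ u v a, f v (x u * a) = if u = v then ε a else 0)
    {T B : Finset ι} (hTB : Disjoint T B) (hB : B.Nonempty) {i : ι} (hi : i ∉ T)
    (hx : ∀ a ∈ insert i T, ∀ b ∈ B, x a * x b = 0) {rs : List A} (hrs : IsWeaklyRegular A rs)
    (hrsx : ∀ r ∈ rs, r ∈ Ideal.span (Set.range x)) :
    T.card + B.card + rs.length ≤ Fintype.card ι := by
  obtain ⟨w, hwP, hw0, hcon, hwedge⟩ := exists_mem_exteriorPower_card K (T ∪ B)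
  by_contra! hlt
  obtain ⟨b, hb⟩ := hB
  obtain ⟨k, hk⟩ : ∃ k, (T ∪ B).card = k + 1 :=
    Nat.exists_eq_succ_of_ne_zero (Finset.card_ne_zero_of_mem (Finset.mem_union_right T hb))
  rw [← Finset.card_union_of_disjoint hTB, hk] at hlt
  obtain ⟨t, ht⟩ := mem_range_differential hrs hrsx hlt
    (cycle_mem_baseChange_exteriorPower x T i (hk ▸ hwP)) (differential_cycle hTB hx hcon)
  have hcoeff (v : ι) (hv : v ∉ T) :
      contraction (LinearMap.proj v) (coefficient ε t) = if i = v then w else 0 := by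
    rw [← coefficient_differential (fun u a ↦ hf u v a), ht]
    exact coefficient_cycle (fun u ↦ by simpa [hε] using hf u v 1) hv i w
  have hw : w = contraction (LinearMap.proj i) (coefficient ε t) := by rw [hcoeff i hi, if_pos rfl]
  refine contraction_ne_zero (by simp) hw0 (hwedge b (Finset.mem_union_right T hb))
    (f := LinearMap.proj b) ?_
  rw [hw, ← Module.End.mul_apply]
  obtain rfl | hib := eq_or_ne i b
  · rw [contraction_mul_self, LinearMap.zero_apply]
  · rw [contraction_mul_comm, LinearMap.neg_apply, Module.End.mul_apply,
      hcoeff b (Finset.disjoint_right.mp hTB hb), if_neg hib, map_zero, neg_zero]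

end Differential
end Koszul

section Polynomial

variable {K σ : Type*} [Field K]

theorem exists_linearMap_mk_eq_coeff {I : Ideal (MvPolynomial σ K)} {k : ℕ}
    (hI : I ≤ idealOfVars σ K ^ k) {d : σ →₀ ℕ} (hd : d.degree < k) :
    ∃ f : (MvPolynomial σ K ⧸ I) →ₗ[K] K, ∀ p, f (Ideal.Quotient.mk I p) = p.coeff d :=
  ⟨(I.restrictScalars K).liftQ (lcoeff K d)
      (fun p hp ↦ (mem_pow_idealOfVars_iff' k p).mp (hI hp) d hd) ∘ₗ
    (Submodule.Quotient.restrictScalarsEquiv K I).symm.toLinearMap, fun _ ↦ rfl⟩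

theorem card_add_card_add_length_le_of_isWeaklyRegular_quotient [Fintype σ] [DecidableEq σ]
    {I : Ideal (MvPolynomial σ K)} (hI : I ≤ idealOfVars σ K ^ 2) {T B : Finset σ}
    (hTB : Disjoint T B) (hB : B.Nonempty) {i : σ} (hi : i ∉ T)
    (hx : ∀ a ∈ insert i T, ∀ b ∈ B, X a * X b ∈ I) {rs : List (MvPolynomial σ K)}
    (hrs : IsWeaklyRegular (MvPolynomial σ K ⧸ I) rs) (hrsx : ∀ r ∈ rs, r ∈ idealOfVars σ K) :
    T.card + B.card + rs.length ≤ Fintype.card σ := by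
  obtain ⟨ε, hε⟩ := exists_linearMap_mk_eq_coeff hI (d := 0) (by simp)
  choose f hf using fun v : σ ↦
    exists_linearMap_mk_eq_coeff hI (d := Finsupp.single v 1) (by simp)
  let π := Ideal.Quotient.mk I
  have hlen := Koszul.card_add_card_add_length_le (x := π ∘ X) ε f
    (by simpa using hε 1) (fun u v a ↦ ?_) hTB hB hi
    (fun a ha b hb ↦ Ideal.Quotient.eq_zero_iff_mem.mpr (hx a ha b hb))
    ((isWeaklyRegular_map_algebraMap_iff _ _ rs).mpr hrs) (fun r hr ↦ ?_)
  · rwa [List.length_map] at hlen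
  · obtain ⟨p, rfl⟩ := Ideal.Quotient.mk_surjective a
    rw [Function.comp_apply, ← map_mul, hf, hε, coeff_X_mul']
    simp only [Finsupp.mem_support_single]
    by_cases huv : u = v
    · subst huv; simp
    · simp [huv]
  · obtain ⟨s, hs, rfl⟩ := List.mem_map.mp hr
    rw [Set.range_comp, ← Ideal.map_span]
    exact Ideal.mem_map_of_mem _ (hrsx s hs)

end Polynomial

section RegularSequences

variable {R : Type*} [CommRing R]

theorem isWeaklyRegular_of_exact {M M' M'' : Type*} [AddCommGroup M] [Module R M]
    [AddCommGroup M'] [Module R M'] [AddCommGroup M''] [Module R M''] {f : M' →ₗ[R] M}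
    {g : M →ₗ[R] M''} (hf : Function.Injective f) (hfg : Function.Exact f g)
    (hg : Function.Surjective g) {rs : List R} (h' : IsWeaklyRegular M' rs)
    (h'' : IsWeaklyRegular M'' rs) : IsWeaklyRegular M rs := by
  induction rs generalizing M M' M'' with
  | nil => exact IsWeaklyRegular.nil R M
  | cons r rs ih =>
    rw [isWeaklyRegular_cons_iff] at h' h'' ⊢
    have hf₀ : Function.Exact (0 : M' →ₗ[R] M') f :=
      LinearMap.exact_zero_iff_injective M' f |>.mpr hf
    have hf_mod : Function.Injective (QuotSMulTop.map r f) := by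
      rw [← LinearMap.exact_zero_iff_injective (QuotSMulTop r M')]
      simpa using QuotSMulTop.map_first_exact_on_four_term_exact_of_isSMulRegular_last hf₀ hfg h''.1
    exact ⟨isSMulRegular_of_range_eq_ker hf hfg.linearMap_ker_eq.symm h'.1 h''.1,
      ih hf_mod (QuotSMulTop.map_exact r hfg hg) (QuotSMulTop.map_surjective r hg) h'.2 h''.2⟩

theorem isWeaklyRegular_quotient_of_colon {J : Ideal R} {x : R} {rs : List R}
    (hcolon : IsWeaklyRegular (R ⧸ J.colon {x}) rs)
    (hsup : IsWeaklyRegular (R ⧸ (J ⊔ Ideal.span {x})) rs) : IsWeaklyRegular (R ⧸ J) rs := by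
  have hJ (a : R) : a ∈ J.colon {x} ↔ a * x ∈ J := Submodule.mem_colon_singleton
  let f : R ⧸ J.colon {x} →ₗ[R] R ⧸ J :=
    Submodule.mapQ _ _ (LinearMap.mulRight R x) fun a ha ↦ (hJ a).mp ha
  let g : R ⧸ J →ₗ[R] R ⧸ (J ⊔ Ideal.span {x}) := Submodule.factor le_sup_left
  refine isWeaklyRegular_of_exact (f := f) (g := g) ?_ (fun b ↦ ?_)
    (Submodule.factor_surjective _) hcolon hsup
  · refine (injective_iff_map_eq_zero f).mpr fun a ha ↦ ?_
    obtain ⟨a, rfl⟩ := Submodule.mkQ_surjective _ a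
    exact (Submodule.Quotient.mk_eq_zero _).mpr
      ((hJ a).mpr ((Submodule.Quotient.mk_eq_zero _).mp ha))
  · obtain ⟨b, rfl⟩ := Submodule.mkQ_surjective _ b
    constructor
    · intro hb
      obtain ⟨c, hc, d, hd, rfl⟩ := Submodule.mem_sup.mp ((Submodule.Quotient.mk_eq_zero _).mp hb)
      obtain ⟨a, rfl⟩ := Ideal.mem_span_singleton'.mp hd
      refine ⟨Submodule.mkQ _ a, (Submodule.Quotient.eq _).mpr ?_⟩
      simpa using hc
    · rintro ⟨a, ha⟩
      obtain ⟨a, rfl⟩ := Submodule.mkQ_surjective _ a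
      rw [← ha]
      exact (Submodule.Quotient.mk_eq_zero _).mpr
        (Ideal.mem_sup_right (Ideal.mem_span_singleton'.mpr ⟨a, rfl⟩))

theorem isWeaklyRegular_quotient_cons {J : Ideal R} {r : R} {rs : List R}
    (hr : ∀ a, r * a ∈ J → a ∈ J) (hrs : IsWeaklyRegular (R ⧸ (J ⊔ Ideal.span {r})) rs) :
    IsWeaklyRegular (R ⧸ J) (r :: rs) := by
  refine IsWeaklyRegular.cons ((isSMulRegular_quotient_iff_mem_of_smul_mem J r).mpr hr) ?_
  have hmap : r • (⊤ : Submodule R (R ⧸ J)) = Submodule.map J.mkQ (Ideal.span {r}) := by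
    conv_rhs => rw [← Ideal.mul_top (Ideal.span {r}), ← smul_eq_mul, Submodule.map_smul'',
      Submodule.map_top, Submodule.range_mkQ, Submodule.ideal_span_singleton_smul]
  exact (((Submodule.quotEquivOfEq _ _ hmap).trans
    (Submodule.quotientQuotientEquivQuotientSup J _)).isWeaklyRegular_congr rs).mpr hrs

theorem isRegular_quotient_of_isWeaklyRegular {J 𝔪 : Ideal R} (h𝔪 : 𝔪 ≠ ⊤) (hJ : J ≤ 𝔪)
    {rs : List R} (hrs : IsWeaklyRegular (R ⧸ J) rs) (hrs𝔪 : ∀ r ∈ rs, r ∈ 𝔪) :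
    IsRegular (R ⧸ J) rs := by
  refine ⟨hrs, fun htop ↦ h𝔪 ((Ideal.eq_top_iff_one 𝔪).mpr ?_)⟩
  have h1 : (1 : R ⧸ J) ∈ Ideal.ofList rs • (⊤ : Submodule R (R ⧸ J)) := htop ▸ trivial
  rw [Ideal.smul_top_eq_map] at h1
  rw [← Ideal.mem_quotient_iff_mem hJ]
  exact Ideal.map_mono (Ideal.span_le.mpr hrs𝔪) h1

theorem sup_span_singleton_eq_of_sub_mem {J : Ideal R} {a b : R} (hab : a - b ∈ J) :
    J ⊔ Ideal.span {a} = J ⊔ Ideal.span {b} := by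
  have key {a b : R} (hab : a - b ∈ J) : J ⊔ Ideal.span {a} ≤ J ⊔ Ideal.span {b} := by
    refine sup_le le_sup_left ((Ideal.span_singleton_le_iff_mem _).mpr ?_)
    rw [← sub_add_cancel a b]
    exact add_mem (Ideal.mem_sup_left hab)
      (Ideal.mem_sup_right (Ideal.mem_span_singleton_self b))
  exact (key hab).antisymm (key (by simpa using neg_mem hab))

theorem ringKrullDim_quotient_le_of_forall_isPrime {I : Ideal R} {d : WithBot ℕ∞}
    (h : ∀ Q : Ideal R, Q.IsPrime → I ≤ Q → ∃ J ≤ Q, ringKrullDim (R ⧸ J) ≤ d) :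
    ringKrullDim (R ⧸ I) ≤ d := by
  rw [ringKrullDim_quotient]
  refine iSup_le fun p ↦ ?_
  obtain ⟨J, hJ, hd⟩ := h p.head.1.asIdeal p.head.1.isPrime p.head.2
  let q : LTSeries (PrimeSpectrum.zeroLocus (J : Set R)) :=
    { length := p.length
      toFun i := ⟨(p i).1, hJ.trans (p.head_le i)⟩
      step := p.step }
  exact (Order.LTSeries.length_le_krullDim q).trans (ringKrullDim_quotient J ▸ hd)

end RegularSequences

section VariableIdeals

variable {R σ : Type*} [CommRing R]

theorem mem_span_X_image_of_X_mul_mem {A : Set σ} {u : σ} (hu : u ∉ A) {p : MvPolynomial σ R}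
    (hp : X u * p ∈ Ideal.span (X '' A : Set (MvPolynomial σ R))) :
    p ∈ Ideal.span (X '' A : Set (MvPolynomial σ R)) := by
  classical
  rw [mem_ideal_span_X_image] at hp ⊢
  intro e he
  obtain ⟨v, hv, hne⟩ := hp (Finsupp.single u 1 + e) (by
    rwa [mem_support_iff, coeff_X_mul, ← mem_support_iff])
  have huv : u ≠ v := fun h ↦ hu (h ▸ hv)
  exact ⟨v, hv, by simpa [Finsupp.single_apply, huv] using hne⟩

/-- The sum of the variables of colour `t`. -/
noncomputable def colorSum (R : Type*) [CommRing R] {σ τ : Type*} [Fintype σ] [DecidableEq τ]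
    (c : σ → τ) (t : τ) : MvPolynomial σ R :=
  ∑ v with c v = t, X v

theorem isWeaklyRegular_colorSum [Fintype σ] {τ : Type*} [DecidableEq τ] {c : σ → τ} {A : Set σ}
    (hc : Set.InjOn c Aᶜ) {l : List τ} (hl : l.Nodup) (hlA : ∀ t ∈ l, t ∈ c '' Aᶜ) :
    IsWeaklyRegular (MvPolynomial σ R ⧸ Ideal.span (X '' A : Set (MvPolynomial σ R)))
      (l.map (colorSum R c)) := by
  classical
  induction l generalizing A with
  | nil => exact IsWeaklyRegular.nil _ _
  | cons t l ih =>
    obtain ⟨u, hu, rfl⟩ := hlA t List.mem_cons_self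
    obtain ⟨htl, hl⟩ := List.nodup_cons.mp hl
    have hsub : colorSum R c (c u) - X u ∈ Ideal.span (X '' A : Set (MvPolynomial σ R)) := by
      rw [colorSum, ← Finset.add_sum_erase {v | c v = c u} X (by simp : u ∈ _),
        add_sub_cancel_left]
      refine Ideal.sum_mem _ fun v hv ↦ Ideal.subset_span ⟨v, ?_, rfl⟩
      rw [Finset.mem_erase, Finset.mem_filter_univ] at hv
      by_contra hvA
      exact hv.1 (hc hvA hu hv.2)
    refine isWeaklyRegular_quotient_cons (fun p hp ↦ mem_span_X_image_of_X_mul_mem hu ?_) ?_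
    · simpa [sub_mul] using sub_mem hp (Ideal.mul_mem_right p _ hsub)
    · rw [sup_span_singleton_eq_of_sub_mem hsub, sup_comm, ← Ideal.span_insert,
        ← Set.image_insert_eq]
      refine ih (hc.mono (Set.compl_subset_compl.mpr (Set.subset_insert _ _))) hl fun t ht ↦ ?_
      obtain ⟨v, hv, rfl⟩ := hlA t (List.mem_cons_of_mem _ ht)
      refine ⟨v, ?_, rfl⟩
      rintro (rfl | hvA)
      exacts [htl ht, hv hvA]

theorem ringKrullDim_quotient_span_X_image {K : Type*} [Field K] [Fintype σ] (A : Finset σ) :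
    ringKrullDim (MvPolynomial σ K ⧸ Ideal.span (X '' (A : Set σ) : Set (MvPolynomial σ K))) =
      (Fintype.card σ - A.card : ℕ) := by
  classical
  have hdim : ringKrullDim (MvPolynomial {v // v ∉ A} K) = (Fintype.card σ - A.card : ℕ) := by
    rw [ringKrullDim_of_isNoetherianRing, ringKrullDim_eq_zero_of_field, zero_add,
      Nat.card_eq_fintype_card, Fintype.card_subtype_compl, Fintype.card_coe]
  rw [← hdim]
  let π := Ideal.Quotient.mkₐ K (Ideal.span (X '' (A : Set σ) : Set (MvPolynomial σ K)))
  let ρ := rename (R := K) (Subtype.val : {v // v ∉ A} → σ)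
  let κ := killCompl (R := K) (Subtype.val_injective (p := (· ∉ A)))
  apply le_antisymm
  · refine ringKrullDim_le_of_surjective (π.comp ρ).toRingHom fun q ↦ ?_
    obtain ⟨p, rfl⟩ := Ideal.Quotient.mk_surjective q
    change π p ∈ (π.comp ρ).range
    induction p using MvPolynomial.induction_on with
    | C a => exact ⟨C a, congrArg π (rename_C _ a)⟩
    | add p q hp hq => exact map_add π p q ▸ add_mem hp hq
    | mul_X p v hp =>
      refine map_mul π p (X v) ▸ mul_mem hp ?_
      by_cases hv : v ∈ A
      · rw [show π (X v) = 0 from Ideal.Quotient.eq_zero_iff_mem.mpr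
          (Ideal.subset_span ⟨v, hv, rfl⟩)]
        exact zero_mem _
      · exact ⟨X ⟨v, hv⟩, congrArg π (rename_X _ _)⟩
  · refine ringKrullDim_le_of_surjective (Ideal.Quotient.lift _ κ.toRingHom ?_)
      (Ideal.Quotient.lift_surjective_of_surjective _ _
        fun p ↦ ⟨ρ p, killCompl_rename_app Subtype.val_injective p⟩)
    suffices Ideal.span (X '' A) ≤ RingHom.ker κ.toRingHom from fun p hp ↦ this hp
    rw [Ideal.span_le]
    rintro _ ⟨v, hv, rfl⟩
    simpa [κ, killCompl] using hv

end VariableIdeals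


section EdgeIdeals

theorem idealOfVars_ne_top {σ R : Type*} [CommRing R] [Nontrivial R] : idealOfVars σ R ≠ ⊤ := by
  rw [Ideal.ne_top_iff_one]
  simpa using (C_mem_pow_idealOfVars_iff 1 (1 : R) (σ := σ)).not

variable {σ : Type*}

/-- A set of vertices meeting every edge of the graph `E`. Unlike `SimpleGraph.IsVertexCover`, this
allows loops, whose vertices belong to every cover. -/
def IsVertexCover (E : σ → σ → Prop) (P : Set σ) : Prop :=
  ∀ ⦃u v⦄, E u v → u ∈ P ∨ v ∈ P

/-- The edge ideal of the graph `E`. A loop at `v` contributes `X v ^ 2`. -/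
noncomputable def edgeIdeal (R : Type*) [CommRing R] (E : σ → σ → Prop) :
    Ideal (MvPolynomial σ R) :=
  Ideal.span {p | ∃ i j, E i j ∧ p = X i * X j}

variable {R : Type*} [CommRing R] {E : σ → σ → Prop}

theorem X_mul_X_mem_edgeIdeal {u v : σ} (huv : E u v) : X u * X v ∈ edgeIdeal R E :=
  Ideal.subset_span ⟨u, v, huv, rfl⟩

theorem edgeIdeal_le_sq_idealOfVars : edgeIdeal R E ≤ idealOfVars σ R ^ 2 := by
  refine Ideal.span_le.mpr ?_
  rintro _ ⟨u, v, -, rfl⟩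
  rw [pow_two]
  exact Ideal.mul_mem_mul (Ideal.subset_span ⟨u, rfl⟩) (Ideal.subset_span ⟨v, rfl⟩)

theorem IsVertexCover.edgeIdeal_le {P : Set σ} (hP : IsVertexCover E P) :
    edgeIdeal R E ≤ Ideal.span (X '' P) := by
  refine Ideal.span_le.mpr ?_
  rintro _ ⟨u, v, huv, rfl⟩
  obtain hu | hv := hP huv
  · exact Ideal.mul_mem_right _ _ (Ideal.subset_span ⟨u, hu, rfl⟩)
  · exact Ideal.mul_mem_left _ _ (Ideal.subset_span ⟨v, hv, rfl⟩)

theorem edgeIdeal_sup_colon (hE : ∀ ⦃u v⦄, E u v → E v u) {T : Set σ} {i : σ} (hi : i ∉ T)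
    (hT : IsVertexCover E (T ∪ {v | E v i})) :
    (edgeIdeal R E ⊔ Ideal.span (X '' T)).colon {X i} =
      Ideal.span (X '' (T ∪ {v | E v i})) := by
  set P := T ∪ {v | E v i}
  refine le_antisymm (fun p hp ↦ ?_) (Ideal.span_le.mpr ?_)
  · have hle : edgeIdeal R E ⊔ Ideal.span (X '' T) ≤
        Ideal.span (X '' (P \ {i})) ⊔ Ideal.span {X i} * Ideal.span (X '' P) := by
      have hvar {v : σ} (hv : v ∈ P) (hvi : v ≠ i) : X v ∈
          Ideal.span (X '' (P \ {i}) : Set (MvPolynomial σ R)) :=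
        Ideal.subset_span ⟨v, ⟨hv, hvi⟩, rfl⟩
      have hedge {u v : σ} (huv : E u v) (hu : u ∈ P) : (X u * X v : MvPolynomial σ R) ∈
          Ideal.span (X '' (P \ {i})) ⊔ Ideal.span {X i} * Ideal.span (X '' P) := by
        obtain rfl | hui := eq_or_ne u i
        · exact Ideal.mem_sup_right (Ideal.mul_mem_mul (Ideal.mem_span_singleton_self _)
            (Ideal.subset_span ⟨v, .inr (hE huv), rfl⟩))
        · exact Ideal.mem_sup_left (Ideal.mul_mem_right _ _ (hvar hu hui))
      refine sup_le (Ideal.span_le.mpr ?_) (Ideal.span_le.mpr ?_)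
      · rintro _ ⟨u, v, huv, rfl⟩
        obtain hu | hv := hT huv
        · exact hedge huv hu
        · exact mul_comm (X u : MvPolynomial σ R) _ ▸ hedge (hE huv) hv
      · rintro _ ⟨v, hv, rfl⟩
        exact Ideal.mem_sup_left (hvar (.inl hv) (ne_of_mem_of_not_mem hv hi))
    obtain ⟨q, hq, r, hr, hqr⟩ := Submodule.mem_sup.mp (hle (Submodule.mem_colon_singleton.mp hp))
    obtain ⟨s, hs, rfl⟩ := Ideal.mem_span_singleton_mul.mp hr
    have hps : p - s ∈ Ideal.span (X '' (P \ {i})) := by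
      refine mem_span_X_image_of_X_mul_mem (u := i) (by simp) ?_
      rwa [mul_sub, mul_comm _ p, ← smul_eq_mul p, ← hqr, add_sub_cancel_right]
    rw [← sub_add_cancel p s]
    exact add_mem (Ideal.span_mono (Set.image_mono Set.sdiff_subset) hps) hs
  · rintro _ ⟨v, hv | hv, rfl⟩
    · exact Submodule.mem_colon_singleton.mpr
        (Ideal.mem_sup_right (Ideal.mul_mem_right _ _ (Ideal.subset_span ⟨v, hv, rfl⟩)))
    · exact Submodule.mem_colon_singleton.mpr (Ideal.mem_sup_left (X_mul_X_mem_edgeIdeal hv))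

end EdgeIdeals

section Coloring

/-- The vertex reached from `v` by following `next` upwards until `n` is passed. -/
def color (next : ℕ → ℕ) (n v : ℕ) : ℕ :=
  if v < n ∧ v < next v then color next n (next v) else v
termination_by n - v

theorem bijOn_exchange {α β : Type*} {c : α → β} {S : Set α} {T : Set β} {u v : α}
    (hc : Set.BijOn c S T) (hv : v ∈ S) (huv : c u = c v) :
    Set.BijOn c (insert u (S \ {v})) T := by
  have h := (hc.sdiff_singleton hv).insert (a := u) (by simp [huv])
  rwa [huv, Set.insert_sdiff_self_of_mem (hc.mapsTo hv)] at h

theorem bijOn_color {C : ℕ → Set ℕ} {next : ℕ → ℕ} {n : ℕ} (hn : ∀ v ∈ C n, n ≤ v)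
    (hC : ∀ i < n, C i = C (i + 1) ∨
      i < next i ∧ next i ∈ C (i + 1) ∧ C i = insert i (C (i + 1) \ {next i}))
    {i : ℕ} (hi : i ≤ n) : Set.BijOn (color next n) (C i) (C n) := by
  induction hi using Nat.decreasingInduction with
  | self =>
    refine (Set.bijOn_id _).congr fun v hv ↦ ?_
    rw [color, if_neg (by have := hn v hv; omega), id]
  | of_succ i hi ih =>
    obtain heq | ⟨hlt, hmem, heq⟩ := hC i hi
    · exact heq ▸ ih
    · rw [heq]
      exact bijOn_exchange ih hmem (by rw [color, if_pos ⟨hi, hlt⟩])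

end Coloring

/-- The quotient of `K[σ]` by `I` is Cohen–Macaulay, expressed by a regular sequence of length equal
to the Krull dimension with entries in the ideal generated by the variables. -/
def IsCohenMacaulayQuotient {K σ : Type*} [Field K] (I : Ideal (MvPolynomial σ K)) : Prop :=
  ∃ rs : List (MvPolynomial σ K), (∀ r ∈ rs, r ∈ Ideal.span (Set.range X)) ∧
    IsRegular (MvPolynomial σ K ⧸ I) rs ∧
      (rs.length : WithBot ℕ∞) = ringKrullDim (MvPolynomial σ K ⧸ I)

section EdgeIdealDimension

variable {K σ : Type*} [Field K] [Fintype σ] {E : σ → σ → Prop}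

theorem IsVertexCover.le_ringKrullDim {P : Finset σ} (hP : IsVertexCover E P) :
    ((Fintype.card σ - P.card : ℕ) : WithBot ℕ∞) ≤
      ringKrullDim (MvPolynomial σ K ⧸ edgeIdeal K E) := by
  rw [← ringKrullDim_quotient_span_X_image (K := K)]
  exact ringKrullDim_le_of_surjective _ (Ideal.Quotient.factor_surjective hP.edgeIdeal_le)

end EdgeIdealDimension

section Staircase

/-- The graph `E` on `Fin m` is a staircase with `n` steps: on or above the diagonal, the neighbours
of `i < n` form the nonempty interval `[M i, L i)`, these intervals shrink as `i` grows, and there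
are no other edges. The value `M n = L n` closes the staircase with an empty interval. -/
structure IsStaircase {m : ℕ} (n : ℕ) (E : Fin m → Fin m → Prop) (M L : ℕ → ℕ) : Prop where
  symm : ∀ ⦃u v⦄, E u v → E v u
  adj_iff : ∀ {u v : Fin m}, u ≤ v → (E u v ↔ u.val < n ∧ M u ≤ v ∧ v < L u)
  monotone : Monotone M
  antitone : Antitone L
  le_left : ∀ {i}, i ≤ n → i ≤ M i
  left_lt_right : ∀ {i}, i < n → M i < L i
  left_eq_right : M n = L n
  right_le : ∀ i, L i ≤ m

/-- The vertex cover of a staircase consisting of the vertices below `i` and, when `i` is a step,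
the neighbours of `i` on or above the diagonal. Every minimal vertex cover is of this form. -/
def stairCover (m : ℕ) (M L : ℕ → ℕ) (i : ℕ) : Finset (Fin m) :=
  {v | v.val < i ∨ M i ≤ v.val ∧ v.val < L i}

/-- The vertex that leaves the cover when `v` enters it, on passing from `stairCover m M L v` to
`stairCover m M L (v + 1)`. This is meaningful if the two covers are distinct of equal size. -/
def stairNext (M L : ℕ → ℕ) (v : ℕ) : ℕ :=
  if M (v + 1) = M v then L v - 1 else M v

namespace IsStaircase

variable {m n : ℕ} {E : Fin m → Fin m → Prop} {M L : ℕ → ℕ}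

theorem le_card (h : IsStaircase n E M L) : n ≤ m :=
  (h.le_left le_rfl).trans (h.left_eq_right ▸ h.right_le n)

theorem left_le_right (h : IsStaircase n E M L) {i : ℕ} (hi : i ≤ n) : M i ≤ L i := by
  obtain hi | rfl := hi.lt_or_eq
  exacts [(h.left_lt_right hi).le, h.left_eq_right.le]

theorem disjoint_stairCover (h : IsStaircase n E M L) {i : ℕ} (hi : i ≤ n) :
    Disjoint ({v | v.val < i} : Finset (Fin m))
      ({v | M i ≤ v.val ∧ v.val < L i} : Finset (Fin m)) := by
  have := h.le_left hi
  exact Finset.disjoint_filter.mpr fun v _ hv hMv ↦ by omega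

theorem card_stairCover (h : IsStaircase n E M L) {i : ℕ} (hi : i ≤ n) :
    (stairCover m M L i).card = L i - M i + i := by
  have hiM := h.le_left hi
  have hML := h.left_le_right hi
  have hLm := h.right_le i
  have hmap : (stairCover m M L i).map Fin.valEmbedding =
      Finset.range i ∪ Finset.Ico (M i) (L i) := by
    ext v
    simp only [stairCover, Finset.mem_map, Finset.mem_union, Finset.mem_filter_univ,
      Fin.valEmbedding_apply, Finset.mem_range, Finset.mem_Ico]
    exact ⟨by rintro ⟨v, hv, rfl⟩; exact hv, fun hv ↦ ⟨⟨v, by omega⟩, hv, rfl⟩⟩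
  rw [← Finset.card_map Fin.valEmbedding, hmap, Finset.card_union_of_disjoint, Finset.card_range,
    Nat.card_Ico, add_comm]
  exact Finset.disjoint_left.mpr fun v hv hMv ↦ by
    simp only [Finset.mem_range, Finset.mem_Ico] at hv hMv
    omega

theorem isVertexCover_stairCover (h : IsStaircase n E M L) (i : ℕ) :
    IsVertexCover E (stairCover m M L i : Set (Fin m)) := by
  have hle {u v : Fin m} (huv : u ≤ v) (hE : E u v) :
      u ∈ stairCover m M L i ∨ v ∈ stairCover m M L i := by
    obtain ⟨-, hMv, hvL⟩ := (h.adj_iff huv).mp hE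
    simp only [stairCover, Finset.mem_filter_univ]
    obtain hui | hiu := lt_or_ge u.val i
    · exact .inl (.inl hui)
    · exact .inr (.inr ⟨(h.monotone hiu).trans hMv, hvL.trans_le (h.antitone hiu)⟩)
  intro u v huv
  obtain huv' | hvu := le_total u v
  exacts [hle huv' huv, (hle hvu (h.symm huv)).symm]

theorem coe_stairCover (h : IsStaircase n E M L) {i : Fin m} (hi : i.val < n) :
    (stairCover m M L i : Set (Fin m)) = {v : Fin m | v < i} ∪ {v | E v i} := by
  ext v
  simp only [stairCover, Finset.coe_filter_univ, Set.mem_union, Set.mem_ofPred_eq, ← Fin.lt_def]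
  refine or_congr_right' fun hvi ↦ ?_
  rw [not_lt] at hvi
  exact ⟨fun hv ↦ h.symm ((h.adj_iff hvi).mpr ⟨hi, hv⟩),
    fun hE ↦ ((h.adj_iff hvi).mp (h.symm hE)).2⟩

theorem stairCover_last (h : IsStaircase n E M L) :
    (stairCover m M L n : Set (Fin m)) = {v : Fin m | v.val < n} := by
  ext v
  have := h.left_eq_right
  simp only [stairCover, Finset.coe_filter_univ, Set.mem_ofPred_eq]
  omega

theorem isWeaklyRegular_quotient_edgeIdeal (h : IsStaircase n E M L) {R : Type*} [CommRing R]
    {rs : List (MvPolynomial (Fin m) R)}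
    (hrs : ∀ i ≤ n, IsWeaklyRegular (MvPolynomial (Fin m) R ⧸
      Ideal.span (X '' (stairCover m M L i : Set (Fin m)) : Set (MvPolynomial (Fin m) R))) rs) :
    IsWeaklyRegular (MvPolynomial (Fin m) R ⧸ edgeIdeal R E) rs := by
  let J (i : ℕ) : Ideal (MvPolynomial (Fin m) R) :=
    edgeIdeal R E ⊔ Ideal.span (X '' {v : Fin m | v.val < i})
  suffices ∀ i ≤ n, IsWeaklyRegular (MvPolynomial (Fin m) R ⧸ J i) rs by
    have hJ : J 0 = edgeIdeal R E := by simp [J]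
    exact hJ ▸ this 0 n.zero_le
  intro i hi
  induction hi using Nat.decreasingInduction with
  | self =>
    have hJ : J n = Ideal.span (X '' (stairCover m M L n : Set (Fin m))) := by
      simp only [J, ← h.stairCover_last]
      exact sup_eq_right.mpr (h.isVertexCover_stairCover n).edgeIdeal_le
    exact hJ ▸ hrs n le_rfl
  | of_succ i hi ih =>
    let u : Fin m := ⟨i, hi.trans_le h.le_card⟩
    have hcover : (stairCover m M L i : Set (Fin m)) = _ := h.coe_stairCover (i := u) hi
    refine isWeaklyRegular_quotient_of_colon (x := X u) ?_ ?_
    · have hcolon : (J i).colon {X u} = _ := edgeIdeal_sup_colon h.symm (lt_irrefl u)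
        (hcover ▸ h.isVertexCover_stairCover i)
      exact hcolon ▸ hcover ▸ hrs i hi.le
    · have hsucc : {v : Fin m | v.val < i + 1} = insert u {v : Fin m | v.val < i} := by
        ext v
        simp only [u, Set.mem_ofPred_eq, Set.mem_insert_iff, Fin.ext_iff]
        omega
      have hJ : J (i + 1) = J i ⊔ Ideal.span {X u} := by
        simp only [J]
        rw [hsucc, Set.image_insert_eq, Ideal.span_insert, sup_assoc, sup_comm (Ideal.span {X u})]
      exact hJ ▸ ih

theorem exists_span_stairCover_le (h : IsStaircase n E M L) {R : Type*} [CommRing R]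
    {Q : Ideal (MvPolynomial (Fin m) R)} (hQ : Q.IsPrime) (hEQ : edgeIdeal R E ≤ Q) :
    ∃ i ≤ n, Ideal.span (X '' (stairCover m M L i : Set (Fin m))) ≤ Q := by
  classical
  have hex : ∃ i, i = n ∨ ∃ u : Fin m, u.val = i ∧ X u ∉ Q := ⟨n, .inl rfl⟩
  have hn : Nat.find hex ≤ n := Nat.find_min' hex (.inl rfl)
  refine ⟨Nat.find hex, hn, Ideal.span_le.mpr ?_⟩
  rintro _ ⟨v, hv, rfl⟩
  have hlt {v : Fin m} (hv : v.val < Nat.find hex) : X v ∈ Q :=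
    by_contra fun hvQ ↦ Nat.find_min hex hv (.inr ⟨v, rfl, hvQ⟩)
  obtain hi | ⟨u, hui, huQ⟩ := Nat.find_spec hex
  · rw [hi, h.stairCover_last] at hv
    exact hlt (hi.symm ▸ hv)
  · obtain hun | hun := (hui ▸ hn).lt_or_eq
    · rw [← hui, h.coe_stairCover hun] at hv
      obtain hvu | huv := hv
      · exact hlt (hui ▸ hvu)
      · exact (hQ.mem_or_mem (hEQ (X_mul_X_mem_edgeIdeal huv))).resolve_right huQ
    · rw [← hui, hun, h.stairCover_last] at hv
      exact hlt (hui ▸ hun ▸ hv)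

variable {K : Type*} [Field K]

theorem card_stairCover_add_length_le (h : IsStaircase n E M L) {i : ℕ} (hi : i < n)
    {rs : List (MvPolynomial (Fin m) K)}
    (hrs : IsWeaklyRegular (MvPolynomial (Fin m) K ⧸ edgeIdeal K E) rs)
    (hrsx : ∀ r ∈ rs, r ∈ idealOfVars (Fin m) K) :
    (stairCover m M L i).card + rs.length ≤ m := by
  have hMi := h.left_lt_right hi
  have hLi := h.right_le i
  rw [stairCover, Finset.filter_or, Finset.card_union_of_disjoint (h.disjoint_stairCover hi.le)]
  refine (card_add_card_add_length_le_of_isWeaklyRegular_quotient edgeIdeal_le_sq_idealOfVars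
    (h.disjoint_stairCover hi.le) ⟨⟨M i, by omega⟩, by simpa using hMi⟩
    (i := ⟨i, hi.trans_le h.le_card⟩) (by simp) (fun a ha b hb ↦ ?_) hrs hrsx).trans_eq
    (Fintype.card_fin m)
  have hai : a.val ≤ i := by
    simp only [Finset.mem_insert, Finset.mem_filter_univ, Fin.ext_iff] at ha
    omega
  obtain ⟨hMb, hbL⟩ : M i ≤ b ∧ b < L i := by simpa using hb
  have hab : a ≤ b := hai.trans ((h.le_left hi.le).trans hMb)
  exact X_mul_X_mem_edgeIdeal ((h.adj_iff hab).mpr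
    ⟨hai.trans_lt hi, (h.monotone hai).trans hMb, hbL.trans_le (h.antitone hai)⟩)

theorem image_val_compl_stairCover (h : IsStaircase n E M L) {i : ℕ} (hi : i ≤ n) :
    Fin.val '' (stairCover m M L i : Set (Fin m))ᶜ = Set.Ico i (M i) ∪ Set.Ico (L i) m := by
  have hiM := h.le_left hi
  have hML := h.left_le_right hi
  have hLm := h.right_le i
  ext v
  simp only [stairCover, Finset.coe_filter_univ, Set.mem_image, Set.mem_compl_iff,
    Set.mem_ofPred_eq, Set.mem_union, Set.mem_Ico]
  constructor
  · rintro ⟨v, hv, rfl⟩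
    omega
  · exact fun hv ↦ ⟨⟨v, by omega⟩, by simp only; omega, rfl⟩

theorem image_val_compl_stairCover_last (h : IsStaircase n E M L) :
    Fin.val '' (stairCover m M L n : Set (Fin m))ᶜ = Set.Ico n m := by
  rw [h.image_val_compl_stairCover le_rfl, h.left_eq_right]
  exact Set.Ico_union_Ico_eq_Ico (h.left_eq_right ▸ h.le_left le_rfl) (h.right_le n)

theorem image_val_compl_stairCover_succ (h : IsStaircase n E M L)
    (hcard : ∀ i ≤ n, L i - M i + i = n) {i : ℕ} (hi : i < n) :
    let C (i : ℕ) := Fin.val '' (stairCover m M L i : Set (Fin m))ᶜ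
    C i = C (i + 1) ∨ i < stairNext M L i ∧ stairNext M L i ∈ C (i + 1) ∧
      C i = insert i (C (i + 1) \ {stairNext M L i}) := by
  intro C
  have hLm := h.right_le i
  have hM := h.monotone (Nat.le_add_right i 1)
  have hL := h.antitone (Nat.le_add_right i 1)
  have hiM := h.le_left hi.le
  have hiM' := h.le_left (i := i + 1) hi
  have hML := h.left_lt_right hi
  have hML' := h.left_le_right (i := i + 1) hi
  have hi_card := hcard i hi.le
  have hi_card' := hcard (i + 1) hi
  simp only [C, h.image_val_compl_stairCover hi.le, h.image_val_compl_stairCover (i := i + 1) hi,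
    Set.ext_iff, Set.mem_union, Set.mem_Ico, Set.mem_insert_iff, Set.mem_sdiff,
    Set.mem_singleton_iff, stairNext]
  obtain heq | hne := eq_or_ne (M (i + 1)) (M i)
  · rw [if_pos heq]
    exact .inr ⟨by omega, by omega, fun v ↦ by omega⟩
  · rw [if_neg hne]
    obtain hiM | hiM := hiM.eq_or_lt
    · exact .inl fun v ↦ by omega
    · exact .inr ⟨hiM, by omega, fun v ↦ by omega⟩

theorem bijOn_color_stairNext (h : IsStaircase n E M L)
    (hcard : ∀ i ≤ n, L i - M i + i = n) {i : ℕ} (hi : i ≤ n) :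
    Set.BijOn (fun v : Fin m ↦ color (stairNext M L) n v)
      (stairCover m M L i : Set (Fin m))ᶜ (Set.Ico n m) := by
  rw [← h.image_val_compl_stairCover_last]
  have hge (v) (hv : v ∈ Fin.val '' (stairCover m M L n : Set (Fin m))ᶜ) : n ≤ v := by
    rw [h.image_val_compl_stairCover_last] at hv
    exact hv.1
  exact (bijOn_color hge (fun i hi ↦ h.image_val_compl_stairCover_succ hcard hi) hi).comp
    Fin.val_injective.injOn.bijOn_image

theorem isWeaklyRegular_colorSum_quotient_edgeIdeal (h : IsStaircase n E M L)
    (hcard : ∀ i ≤ n, L i - M i + i = n) (R : Type*) [CommRing R] :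
    IsWeaklyRegular (MvPolynomial (Fin m) R ⧸ edgeIdeal R E)
      ((List.range' n (m - n)).map (colorSum R fun v : Fin m ↦ color (stairNext M L) n v)) := by
  refine h.isWeaklyRegular_quotient_edgeIdeal fun i hi ↦ ?_
  have hbij := h.bijOn_color_stairNext hcard hi
  refine isWeaklyRegular_colorSum hbij.injOn List.nodup_range' fun t ht ↦ ?_
  rw [hbij.image_eq]
  have := h.le_card
  simp only [List.mem_range'_1] at ht
  exact ⟨ht.1, by omega⟩

theorem ringKrullDim_quotient_edgeIdeal (h : IsStaircase n E M L)
    (hcard : ∀ i ≤ n, L i - M i + i = n) :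
    ringKrullDim (MvPolynomial (Fin m) K ⧸ edgeIdeal K E) = (m - n : ℕ) := by
  have hdim {i : ℕ} (hi : i ≤ n) : Fintype.card (Fin m) - (stairCover m M L i).card = m - n := by
    rw [h.card_stairCover hi, hcard i hi, Fintype.card_fin]
  apply le_antisymm
  · refine ringKrullDim_quotient_le_of_forall_isPrime fun Q hQ hEQ ↦ ?_
    obtain ⟨i, hi, hle⟩ := h.exists_span_stairCover_le hQ hEQ
    exact ⟨_, hle, by rw [ringKrullDim_quotient_span_X_image, hdim hi]⟩
  · rw [← hdim le_rfl]
    exact (h.isVertexCover_stairCover n).le_ringKrullDim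

theorem isCohenMacaulayQuotient_edgeIdeal (h : IsStaircase n E M L)
    (hcard : ∀ i ≤ n, L i - M i + i = n) :
    IsCohenMacaulayQuotient (edgeIdeal K E) := by
  set rs := (List.range' n (m - n)).map
    (colorSum K fun v : Fin m ↦ color (stairNext M L) n v) with hrs
  have hrsx (r) (hr : r ∈ rs) : r ∈ idealOfVars (Fin m) K := by
    obtain ⟨t, -, rfl⟩ := List.mem_map.mp hr
    exact sum_mem fun v _ ↦ Ideal.subset_span ⟨v, rfl⟩
  refine ⟨rs, hrsx, isRegular_quotient_of_isWeaklyRegular idealOfVars_ne_top ?_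
    (h.isWeaklyRegular_colorSum_quotient_edgeIdeal hcard K) hrsx, ?_⟩
  · exact edgeIdeal_le_sq_idealOfVars.trans (Ideal.pow_le_self two_ne_zero)
  · rw [h.ringKrullDim_quotient_edgeIdeal hcard, hrs, List.length_map, List.length_range']

theorem isCohenMacaulayQuotient_edgeIdeal_iff (h : IsStaircase n E M L) :
    IsCohenMacaulayQuotient (edgeIdeal K E) ↔ ∀ i < n, L i - M i + i = n := by
  have hn : L n - M n + n = n := by rw [h.left_eq_right, Nat.sub_self, zero_add]
  refine ⟨fun ⟨rs, hrsx, hrs, hlen⟩ i hi ↦ ?_, fun hcard ↦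
    h.isCohenMacaulayQuotient_edgeIdeal fun i hi ↦ hi.lt_or_eq.elim (hcard i) (· ▸ hn)⟩
  have hdim {i : ℕ} (hi : i ≤ n) : m - (L i - M i + i) ≤ rs.length := by
    have hle := (h.isVertexCover_stairCover i).le_ringKrullDim (K := K)
    rw [← hlen, Fintype.card_fin, h.card_stairCover hi] at hle
    exact_mod_cast hle
  have hdepth {i : ℕ} (hi : i < n) : L i - M i + i + rs.length ≤ m :=
    h.card_stairCover hi.le ▸ h.card_stairCover_add_length_le hi hrs.toIsWeaklyRegular hrsx
  have hlast : n ≤ L (n - 1) - M (n - 1) + (n - 1) := by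
    have := h.left_lt_right (i := n - 1) (by omega)
    omega
  have := hdim le_rfl
  have := hdim hi.le
  have := hdepth hi
  have := hdepth (i := n - 1) (by omega)
  omega

end IsStaircase

end Staircase

theorem sInf_eq_sSup_and_sSup_le_iff {ι : Type*} [Finite ι] {f : ι → ℕ} {N : ℕ} {i₀ : ι}
    (hN : N ≤ f i₀) :
    (sInf {h | ∃ i, h = f i} = sSup {h | ∃ i, h = f i} ∧ sSup {h | ∃ i, h = f i} ≤ N) ↔
      ∀ i, f i = N := by
  have hset : {h | ∃ i, h = f i} = Set.range f := Set.ext fun h ↦ exists_congr fun i ↦ eq_comm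
  rw [hset]
  have hle (i : ι) : f i ≤ sSup (Set.range f) :=
    le_csSup (Set.finite_range f).bddAbove (Set.mem_range_self i)
  constructor
  · rintro ⟨heq, hsup⟩ i
    have hge : sInf (Set.range f) ≤ f i := Nat.sInf_le (Set.mem_range_self i)
    have := hle i
    have := hle i₀
    omega
  · intro hf
    have : Set.range f = {N} := by
      rw [funext hf]
      have : Nonempty ι := ⟨i₀⟩
      exact Set.range_const
    simp [this]

/-- The graph `E` is a generalized Ferrers graph: on or above the diagonal, the neighbours of the
vertex `i : Fin n` are exactly those in the nonempty interval `[mu i, lam i)`, where `mu` increases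
and `lam` decreases, and the vertices from `n` on have no neighbours there. With vertices counted
from `0`, the bounds `lam i` and `mu i` are the `λ` and `μ` of the vertex labelled `i + 1`. -/
structure IsGeneralizedFerrers {m n : ℕ} (hnm : n ≤ m) (E : Fin m → Fin m → Prop)
    (lam mu : Fin n → ℕ) : Prop where
  symm : ∀ i j, E i j → E j i
  not_adj : ∀ i j : Fin m, n ≤ i.val → i.val ≤ j.val → ¬ E i j
  lam_mem : ∀ i : Fin n, ∃ j : Fin m, j.val + 1 = lam i ∧ E (Fin.castLE hnm i) j
  lam_max : ∀ (i : Fin n) (j : Fin m), E (Fin.castLE hnm i) j → j.val < lam i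
  mu_mem : ∀ i : Fin n, ∃ j : Fin m, j.val = mu i ∧ i.val ≤ j.val ∧ E (Fin.castLE hnm i) j
  mu_min : ∀ (i : Fin n) (j : Fin m), i.val ≤ j.val → E (Fin.castLE hnm i) j → mu i ≤ j.val
  lam_anti : Antitone lam
  mu_mono : Monotone mu
  adj : ∀ (i : Fin n) (j : Fin m), mu i ≤ j.val → j.val < lam i → E (Fin.castLE hnm i) j

theorem IsGeneralizedFerrers.exists_isStaircase {m n : ℕ} {hnm : n ≤ m} {E : Fin m → Fin m → Prop}
    {lam mu : Fin n → ℕ} (hE : IsGeneralizedFerrers hnm E lam mu) (hn : 1 ≤ n) :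
    ∃ M L : ℕ → ℕ, IsStaircase n E M L ∧ (∀ i : Fin n, M i = mu i) ∧ ∀ i : Fin n, L i = lam i := by
  have hmulam (i : Fin n) : i.val ≤ mu i ∧ mu i < lam i ∧ lam i ≤ m := by
    obtain ⟨j, hj, hij, hEj⟩ := hE.mu_mem i
    obtain ⟨k, hk, -⟩ := hE.lam_mem i
    exact ⟨hj ▸ hij, hj ▸ hE.lam_max i j hEj, hk ▸ k.isLt⟩
  let clamp (i : ℕ) : Fin n := ⟨min i (n - 1), by omega⟩
  have hclamp : Monotone clamp := fun i j hij ↦ Fin.mk_le_mk.mpr (by omega)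
  have hclamp_val (i : Fin n) : clamp i = i := Fin.ext (min_eq_left (by omega))
  let M (i : ℕ) := if i < n then mu (clamp i) else lam (clamp i)
  have hM (i : Fin n) : M i = mu i := by simp only [M, i.isLt, if_true, hclamp_val]
  have hL (i : Fin n) : lam (clamp i) = lam i := by rw [hclamp_val]
  refine ⟨M, fun i ↦ lam (clamp i), ⟨fun u v ↦ hE.symm u v, fun {u v} huv ↦ ?_,
    fun i j hij ↦ ?_, fun i j hij ↦ hE.lam_anti (hclamp hij), fun {i} hi ↦ ?_, fun {i} hi ↦ ?_,
    if_neg (lt_irrefl n), fun i ↦ (hmulam _).2.2⟩, hM, hL⟩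
  · constructor
    · intro huvE
      have hu : u.val < n := not_le.mp fun hnu ↦ hE.not_adj u v hnu huv huvE
      exact ⟨hu, (hM ⟨u, hu⟩).trans_le (hE.mu_min ⟨u, hu⟩ v huv huvE),
        (hE.lam_max ⟨u, hu⟩ v huvE).trans_eq (hL ⟨u, hu⟩).symm⟩
    · rintro ⟨hu, hMv, hvL⟩
      exact hE.adj ⟨u, hu⟩ v ((hM ⟨u, hu⟩).symm.trans_le hMv) (hvL.trans_eq (hL ⟨u, hu⟩))
  · have hmu := hE.mu_mono (hclamp hij)
    have hlt := (hmulam (clamp j)).2.1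
    have hlast (hi : ¬ i < n) : clamp i = clamp j := Fin.ext (by simp only [clamp]; omega)
    simp only [M]
    split_ifs with hi hj hj
    · exact hmu
    · exact hmu.trans hlt.le
    · omega
    · rw [hlast hi]
  · obtain ⟨hle, hlt, -⟩ := hmulam (clamp i)
    simp only [M, clamp] at hle hlt ⊢
    split_ifs <;> omega
  · simpa only [M, hi, if_true] using (hmulam (clamp i)).2.1

theorem edge_ideal_cohenMacaulay_iff_general (K : Type*) [Field K] {m n : ℕ} (hn : 1 ≤ n)
    {hnm : n ≤ m} {E : Fin m → Fin m → Prop} {lam mu : Fin n → ℕ}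
    (hE : IsGeneralizedFerrers hnm E lam mu) :
    IsCohenMacaulayQuotient (edgeIdeal K E) ↔
      (sInf {h : ℕ | ∃ i : Fin n, h = lam i - mu i + i.val} =
          sSup {h : ℕ | ∃ i : Fin n, h = lam i - mu i + i.val} ∧
        sSup {h : ℕ | ∃ i : Fin n, h = lam i - mu i + i.val} ≤ n) := by
  obtain ⟨M, L, hML, hM, hL⟩ := hE.exists_isStaircase hn
  let last : Fin n := ⟨n - 1, by omega⟩
  have hlast : n ≤ lam last - mu last + last.val := by
    have := hML.left_lt_right last.isLt
    rw [hM, hL] at this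
    simp only [last] at this ⊢
    omega
  rw [hML.isCohenMacaulayQuotient_edgeIdeal_iff,
    sInf_eq_sSup_and_sSup_le_iff (f := fun i : Fin n ↦ lam i - mu i + i.val) hlast, Fin.forall_iff]
  exact forall₂_congr fun i hi ↦ by rw [← hM ⟨i, hi⟩, ← hL ⟨i, hi⟩]

/-- Under the hypotheses of Proposition 4.2 (graph `E` on
`{1,…,m}`, symmetric, loops allowed, no isolated vertex; `n`, `λ`, `μ` as in
the text; `λ_1 = m`, `λ` nonincreasing, `μ` nondecreasing, Condition (4.1)),
the ring `S/I_G` is Cohen–Macaulay — i.e. there is a list of elements of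
`𝔪 = (x_1,…,x_m)` that is a regular sequence on `S/I_G` of length equal to the
Krull dimension of `S/I_G` — if and only if
`min_{1≤j≤n} (λ_j − μ_j + j − 1) = max_{1≤j≤n} (λ_j − μ_j + j − 1) ≤ n`.
Vertices are `Fin m` (1-based label `v.val + 1`); `i : Fin n` has 1-based label
`i.val + 1`, so the quantity `λ_j − μ_j + j − 1` reads `lam i - mu i + i.val`. -/
theorem edge_ideal_cohenMacaulay_iff
    (K : Type*) [Field K] (m : ℕ) (hm : 1 ≤ m)
    (E : Fin m → Fin m → Prop)
    (hsymm : ∀ i j, E i j → E j i)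
    (hcover : ∀ i, ∃ j, E i j)
    (n : ℕ) (hn : 1 ≤ n) (hnm : n ≤ m)
    (hn_mem : ∃ j : Fin m, n - 1 ≤ j.val ∧ E ⟨n - 1, by omega⟩ j)
    (hn_max : ∀ i j : Fin m, n ≤ i.val → i.val ≤ j.val → ¬ E i j)
    (lam mu : Fin n → ℕ)
    (hlam_mem : ∀ i : Fin n, ∃ j : Fin m, j.val + 1 = lam i ∧ E (Fin.castLE hnm i) j)
    (hlam_max : ∀ (i : Fin n) (j : Fin m), E (Fin.castLE hnm i) j → j.val < lam i)
    (hmu_mem : ∀ i : Fin n, ∃ j : Fin m, j.val = mu i ∧ i.val ≤ j.val ∧ E (Fin.castLE hnm i) j)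
    (hmu_min : ∀ (i : Fin n) (j : Fin m), i.val ≤ j.val → E (Fin.castLE hnm i) j → mu i ≤ j.val)
    (hlam_top : lam ⟨0, hn⟩ = m)
    (hlam_anti : Antitone lam)
    (hmu_mono : Monotone mu)
    (hcond : ∀ (i : Fin n) (j : Fin m), mu i ≤ j.val → j.val < lam i → E (Fin.castLE hnm i) j) :
    (∃ rs : List (MvPolynomial (Fin m) K),
        (∀ r ∈ rs, r ∈ Ideal.span (Set.range (X : Fin m → MvPolynomial (Fin m) K))) ∧
        RingTheory.Sequence.IsRegular
          (MvPolynomial (Fin m) K ⧸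
            Ideal.span {p : MvPolynomial (Fin m) K |
              ∃ i j : Fin m, E i j ∧ p = X i * X j}) rs ∧
        (rs.length : WithBot ℕ∞) =
          ringKrullDim
            (MvPolynomial (Fin m) K ⧸
              Ideal.span {p : MvPolynomial (Fin m) K |
                ∃ i j : Fin m, E i j ∧ p = X i * X j})) ↔
      (sInf {h : ℕ | ∃ i : Fin n, h = lam i - mu i + i.val} =
          sSup {h : ℕ | ∃ i : Fin n, h = lam i - mu i + i.val} ∧
        sSup {h : ℕ | ∃ i : Fin n, h = lam i - mu i + i.val} ≤ n) :=
  edge_ideal_cohenMacaulay_iff_general K hn ⟨hsymm, hn_max, hlam_mem, hlam_max, hmu_mem, hmu_min,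
    hlam_anti, hmu_mono, hcond⟩
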